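/- If (X.u, Y.v) ∈ Deriv'(𝒫_𝒞) and σ ∈ Σ has ⟨σ⟩ = ⊕, then (X.uσ, Y.vσ) ∈ Deriv'(𝒫_𝒞); if instead ⟨σ⟩ = ⊖, then (Y.vσ, X.uσ) ∈ Deriv'(𝒫_𝒞). -/

import Mathlib

/-- The two-element sign monoid `{⊕, ⊖}` of variances. -/
inductive Sign : Type where
  | pos
  | neg
deriving DecidableEq, Repr

/-- Multiplication in the sign monoid (`⊕` is the identity, `⊖ · ⊖ = ⊕`). -/
def Sign.mul : Sign → Sign → Sign
  | .pos, s => s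
  | .neg, .pos => .neg
  | .neg, .neg => .pos

/-- Variance of a word in `Σ*`: `⟨ε⟩ = ⊕`, `⟨xw⟩ = ⟨x⟩·⟨w⟩`. -/
def wordSign {L : Type} (sgn : L → Sign) : List L → Sign
  | [] => .pos
  | x :: w => (sgn x).mul (wordSign sgn w)

/-- A derived type variable `α.w` with base type variable `α ∈ 𝒱` and word `w ∈ Σ*`. -/
structure DTV (V L : Type) : Type where
  base : V
  word : List L

/-- Appending a single field label to a derived type variable: `α.ℓ`. -/
def DTV.app {V L : Type} (α : DTV V L) (ℓ : L) : DTV V L :=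
  ⟨α.base, α.word ++ [ℓ]⟩

/-- A constraint: either `VAR X` or `X ⊑ Y` for derived type variables. -/
inductive Constraint (V L : Type) : Type where
  | var : DTV V L → Constraint V L
  | sub : DTV V L → DTV V L → Constraint V L

/-- Entailment `𝒞 ⊢ c`: the least relation containing `𝒞` and closed under the
deduction rules T-Left, T-Right, T-InheritL, T-InheritR, T-Prefix, S-Refl,
S-Trans, S-Field⊕, S-Field⊖ and S-Pointer. -/
inductive Entails {V L : Type} (sgn : L → Sign) (load store : L)
    (C : Set (Constraint V L)) : Constraint V L → Prop where
  | ax {c} : c ∈ C → Entails sgn load store C c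
  | tLeft {α β} : Entails sgn load store C (.sub α β) →
      Entails sgn load store C (.var α)
  | tRight {α β} : Entails sgn load store C (.sub α β) →
      Entails sgn load store C (.var β)
  | tInheritL {α β : DTV V L} {ℓ} : Entails sgn load store C (.sub α β) →
      Entails sgn load store C (.var (α.app ℓ)) →
      Entails sgn load store C (.var (β.app ℓ))
  | tInheritR {α β : DTV V L} {ℓ} : Entails sgn load store C (.sub α β) →
      Entails sgn load store C (.var (β.app ℓ)) →
      Entails sgn load store C (.var (α.app ℓ))
  | tPrefix {α : DTV V L} {ℓ} : Entails sgn load store C (.var (α.app ℓ)) →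
      Entails sgn load store C (.var α)
  | sRefl {α} : Entails sgn load store C (.var α) →
      Entails sgn load store C (.sub α α)
  | sTrans {α β γ} : Entails sgn load store C (.sub α β) →
      Entails sgn load store C (.sub β γ) →
      Entails sgn load store C (.sub α γ)
  | sFieldPos {α β : DTV V L} {ℓ} : Entails sgn load store C (.sub α β) →
      Entails sgn load store C (.var (β.app ℓ)) → sgn ℓ = .pos →
      Entails sgn load store C (.sub (α.app ℓ) (β.app ℓ))
  | sFieldNeg {α β : DTV V L} {ℓ} : Entails sgn load store C (.sub α β) →
      Entails sgn load store C (.var (β.app ℓ)) → sgn ℓ = .neg →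
      Entails sgn load store C (.sub (β.app ℓ) (α.app ℓ))
  | sPointer {α : DTV V L} : Entails sgn load store C (.var (α.app load)) →
      Entails sgn load store C (.var (α.app store)) →
      Entails sgn load store C (.sub (α.app store) (α.app load))

/-- `𝒞` is closed under T-Left, T-Right and T-Prefix. -/
def ClosedTLRP {V L : Type} (C : Set (Constraint V L)) : Prop :=
  (∀ α β : DTV V L, Constraint.sub α β ∈ C →
      Constraint.var α ∈ C ∧ Constraint.var β ∈ C) ∧
  (∀ (α : DTV V L) (ℓ : L), Constraint.var (α.app ℓ) ∈ C →
      Constraint.var α ∈ C)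

/-- Control states of the pushdown system `𝒫_𝒞`:
`Ṽ = ((lhs(𝒱_i) ⨿ rhs(𝒱_i) ⨿ 𝒱_u) × {⊕,⊖}) ∪ {#Start, #End}`.
`lt x a` is `(x_L)^a`, `rt x a` is `(x_R)^a`, `un x a` is `x^a` for
uninteresting `x`. -/
inductive Ctl (V : Type) : Type where
  | start : Ctl V
  | fin : Ctl V
  | lt : V → Sign → Ctl V
  | rt : V → Sign → Ctl V
  | un : V → Sign → Ctl V

/-- Stack symbols `Σ̃ = Σ ∪ {v^⊕, v^⊖ : v ∈ 𝒱_i}`. -/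
inductive StkSym (V L : Type) : Type where
  | lbl : L → StkSym V L
  | tv : V → Sign → StkSym V L

/-- A word of field labels seen as a stack word. -/
def symWord {V L : Type} (u : List L) : List (StkSym V L) :=
  u.map StkSym.lbl

/-- `lhs(x)^a`: tagged `x_L` if `x` is interesting, plain otherwise. -/
def lhsCtl {V : Type} (I : V → Bool) (x : V) (a : Sign) : Ctl V :=
  if I x then .lt x a else .un x a

/-- `rhs(x)^a`: tagged `x_R` if `x` is interesting, plain otherwise. -/
def rhsCtl {V : Type} (I : V → Bool) (x : V) (a : Sign) : Ctl V :=
  if I x then .rt x a else .un x a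

/-- A configuration of an unconstrained pushdown system: a control state
together with a stack word. -/
abbrev PDSConfig (V L : Type) : Type := Ctl V × List (StkSym V L)

/-- A transition rule `⟨X; u⟩ ↪ ⟨Y; v⟩`. -/
abbrev PDSRule (V L : Type) : Type := PDSConfig V L × PDSConfig V L

/-- `rule⊕(p.u ⊑ q.v) = ⟨lhs(p)^{⟨u⟩}; u⟩ ↪ ⟨rhs(q)^{⟨v⟩}; v⟩`. -/
def rulePos {V L : Type} (I : V → Bool) (sgn : L → Sign)
    (c : DTV V L × DTV V L) : PDSRule V L :=
  ((lhsCtl I c.1.base (wordSign sgn c.1.word), symWord c.1.word),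
   (rhsCtl I c.2.base (wordSign sgn c.2.word), symWord c.2.word))

/-- `rule⊖(p.u ⊑ q.v) = ⟨lhs(q)^{⊖·⟨v⟩}; v⟩ ↪ ⟨rhs(p)^{⊖·⟨u⟩}; u⟩`. -/
def ruleNeg {V L : Type} (I : V → Bool) (sgn : L → Sign)
    (c : DTV V L × DTV V L) : PDSRule V L :=
  ((lhsCtl I c.2.base (Sign.neg.mul (wordSign sgn c.2.word)), symWord c.2.word),
   (rhsCtl I c.1.base (Sign.neg.mul (wordSign sgn c.1.word)), symWord c.1.word))

/-- The transition rules `Δ = Δ_𝒞 ∪ Δ_ptr ∪ Δ_start ∪ Δ_end` of the pushdown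
system `𝒫_𝒞` associated to a set `𝒞` of subtype constraints between derived
type variables. -/
def Delta {V L : Type} (I : V → Bool) (sgn : L → Sign) (load store : L)
    (C : Set (DTV V L × DTV V L)) : Set (PDSRule V L) :=
  {r | ∃ c ∈ C, r = rulePos I sgn c ∨ r = ruleNeg I sgn c} ∪
  {r | ∃ v : DTV V L,
      r = rulePos I sgn (v.app store, v.app load) ∨
      r = ruleNeg I sgn (v.app store, v.app load)} ∪
  {r | ∃ (v : V) (a : Sign), I v ∧
      r = ((.start, [StkSym.tv v a]), (.lt v a, ([] : List (StkSym V L))))} ∪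
  {r | ∃ (v : V) (a : Sign), I v ∧
      r = ((.rt v a, ([] : List (StkSym V L))), (.fin, [StkSym.tv v a]))}

/-- One transition step of an unconstrained pushdown system:
`(X, w) ⟶ (Y, w')` iff there is a suffix `s` and a rule `⟨X; u⟩ ↪ ⟨Y; v⟩`
with `w = us` and `w' = vs`. -/
def PDSStep {V L : Type} (Δ : Set (PDSRule V L))
    (c c' : PDSConfig V L) : Prop :=
  ∃ r ∈ Δ, ∃ s : List (StkSym V L),
    c = (r.1.1, r.1.2 ++ s) ∧ c' = (r.2.1, r.2.2 ++ s)

/-- The reflexive-transitive closure `⟶*` of the transition relation. -/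
def PDSSteps {V L : Type} (Δ : Set (PDSRule V L)) :
    PDSConfig V L → PDSConfig V L → Prop :=
  Relation.ReflTransGen (PDSStep Δ)

/-- `Deriv(𝒫_𝒞)`, as a relation on triples `X^a u`: `X, Y` are interesting and
`(#Start, X^a u) ⟶* (#End, Y^b v)`. -/
def Deriv {V L : Type} (I : V → Bool) (sgn : L → Sign) (load store : L)
    (C : Set (DTV V L × DTV V L)) :
    (V × Sign × List L) → (V × Sign × List L) → Prop :=
  fun p q =>
    I p.1 ∧ I q.1 ∧
      PDSSteps (Delta I sgn load store C)
        (.start, StkSym.tv p.1 p.2.1 :: symWord p.2.2)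
        (.fin, StkSym.tv q.1 q.2.1 :: symWord q.2.2)

/-- `Deriv'(𝒫_𝒞) = {(X.u, Y.v) : (X^{⟨u⟩} u, Y^{⟨v⟩} v) ∈ Deriv(𝒫_𝒞)}`. -/
def Deriv' {V L : Type} (I : V → Bool) (sgn : L → Sign) (load store : L)
    (C : Set (DTV V L × DTV V L)) :
    (V × List L) → (V × List L) → Prop :=
  fun p q =>
    Deriv I sgn load store C (p.1, wordSign sgn p.2, p.2)
      (q.1, wordSign sgn q.2, q.2)

/-!
Stack suffixes never obstruct a transition, so a common word `w` may be appended to both ends of a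
run from `X^{⟨u⟩} u` to `Y^{⟨v⟩} v`. If `⟨w⟩ = ⊖`, the variances `⟨u⟩` and `⟨v⟩` are then opposite
to `⟨uw⟩` and `⟨vw⟩`, which is repaired by duality: exchanging `#Start` with `#End` and `L` with
`R`, flipping all variances and reversing arrows swaps `rule⊕(c)` and `rule⊖(c)`, hence maps `Δ` to
itself, and so turns the run into one from `Y^{⟨vw⟩} vw` to `X^{⟨uw⟩} uw`.
-/

namespace Sign

theorem mul_pos (a : Sign) : a.mul .pos = a := by
  cases a <;> rfl

theorem mul_comm (a b : Sign) : a.mul b = b.mul a := by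
  cases a <;> cases b <;> rfl

theorem mul_assoc (a b c : Sign) : (a.mul b).mul c = a.mul (b.mul c) := by
  cases a <;> cases b <;> cases c <;> rfl

theorem neg_mul_neg_mul (a : Sign) : Sign.neg.mul (Sign.neg.mul a) = a := by
  cases a <;> rfl

end Sign

theorem wordSign_append {L : Type} (sgn : L → Sign) (u w : List L) :
    wordSign sgn (u ++ w) = (wordSign sgn u).mul (wordSign sgn w) := by
  induction u with
  | nil => rfl
  | cons x u ih => simp only [List.cons_append, wordSign, ih, Sign.mul_assoc]

/-- Duality on control states: exchanges `#Start` with `#End` and `x_L` with `x_R`, and flips the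
variance. -/
def Ctl.dual {V : Type} : Ctl V → Ctl V
  | .start => .fin
  | .fin => .start
  | .lt x a => .rt x (Sign.neg.mul a)
  | .rt x a => .lt x (Sign.neg.mul a)
  | .un x a => .un x (Sign.neg.mul a)

/-- Duality on stack symbols: flips the variance of type variables and fixes field labels. -/
def StkSym.dual {V L : Type} : StkSym V L → StkSym V L
  | .lbl l => .lbl l
  | .tv x a => .tv x (Sign.neg.mul a)

/-- Duality on configurations, acting on the control state and on each stack symbol. -/
def PDSConfig.dual {V L : Type} (c : PDSConfig V L) : PDSConfig V L :=
  (c.1.dual, c.2.map StkSym.dual)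

/-- Duality on transition rules: `⟨X; u⟩ ↪ ⟨Y; v⟩` becomes the rule from the dual of `⟨Y; v⟩` to the
dual of `⟨X; u⟩`. -/
def PDSRule.dual {V L : Type} (r : PDSRule V L) : PDSRule V L :=
  (PDSConfig.dual r.2, PDSConfig.dual r.1)

section Symbols

variable {V L : Type} (I : V → Bool)

theorem lhsCtl_dual (x : V) (a : Sign) :
    (lhsCtl I x a).dual = rhsCtl I x (Sign.neg.mul a) := by
  unfold lhsCtl rhsCtl
  split <;> rfl

theorem rhsCtl_dual (x : V) (a : Sign) :
    (rhsCtl I x a).dual = lhsCtl I x (Sign.neg.mul a) := by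
  unfold lhsCtl rhsCtl
  split <;> rfl

theorem symWord_append (u w : List L) :
    (symWord (u ++ w) : List (StkSym V L)) = symWord u ++ symWord w :=
  List.map_append

theorem map_dual_symWord (u : List L) :
    (symWord u : List (StkSym V L)).map StkSym.dual = symWord u := by
  simp [symWord, StkSym.dual]

end Symbols

section Rules

variable {V L : Type} (I : V → Bool) (sgn : L → Sign)

theorem rulePos_dual (c : DTV V L × DTV V L) :
    (rulePos I sgn c).dual = ruleNeg I sgn c := by
  simp only [PDSRule.dual, PDSConfig.dual, rulePos, ruleNeg, lhsCtl_dual, rhsCtl_dual,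
    map_dual_symWord]

theorem ruleNeg_dual (c : DTV V L × DTV V L) :
    (ruleNeg I sgn c).dual = rulePos I sgn c := by
  simp only [PDSRule.dual, PDSConfig.dual, rulePos, ruleNeg, lhsCtl_dual, rhsCtl_dual,
    map_dual_symWord, Sign.neg_mul_neg_mul]

variable {I sgn} in
theorem dual_mem_Delta {load store : L} {C : Set (DTV V L × DTV V L)} {r : PDSRule V L}
    (hr : r ∈ Delta I sgn load store C) : r.dual ∈ Delta I sgn load store C := by
  rcases hr with ((⟨c, hc, rfl | rfl⟩ | ⟨w, rfl | rfl⟩) | ⟨x, a, hx, rfl⟩) | ⟨x, a, hx, rfl⟩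
  · exact .inl (.inl (.inl ⟨c, hc, .inr (rulePos_dual I sgn c)⟩))
  · exact .inl (.inl (.inl ⟨c, hc, .inl (ruleNeg_dual I sgn c)⟩))
  · exact .inl (.inl (.inr ⟨w, .inr (rulePos_dual I sgn _)⟩))
  · exact .inl (.inl (.inr ⟨w, .inl (ruleNeg_dual I sgn _)⟩))
  · exact .inr ⟨x, Sign.neg.mul a, hx, rfl⟩
  · exact .inl (.inr ⟨x, Sign.neg.mul a, hx, rfl⟩)

end Rules

section Runs

variable {V L : Type} {Δ : Set (PDSRule V L)} {c d : PDSConfig V L}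

theorem PDSStep.append (h : PDSStep Δ c d) (t : List (StkSym V L)) :
    PDSStep Δ (c.1, c.2 ++ t) (d.1, d.2 ++ t) := by
  obtain ⟨r, hr, s, rfl, rfl⟩ := h
  refine ⟨r, hr, s ++ t, ?_, ?_⟩ <;> rw [List.append_assoc]

theorem PDSSteps.append (h : PDSSteps Δ c d) (t : List (StkSym V L)) :
    PDSSteps Δ (c.1, c.2 ++ t) (d.1, d.2 ++ t) :=
  Relation.ReflTransGen.lift (fun e : PDSConfig V L => (e.1, e.2 ++ t))
    (fun _ _ hstep => hstep.append t) _ _ h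

theorem PDSStep.dual (hΔ : ∀ r ∈ Δ, r.dual ∈ Δ) (h : PDSStep Δ c d) :
    PDSStep Δ d.dual c.dual := by
  obtain ⟨r, hr, s, rfl, rfl⟩ := h
  refine ⟨r.dual, hΔ r hr, s.map StkSym.dual, ?_, ?_⟩ <;>
    simp only [PDSRule.dual, PDSConfig.dual, List.map_append]

theorem PDSSteps.dual (hΔ : ∀ r ∈ Δ, r.dual ∈ Δ) (h : PDSSteps Δ c d) :
    PDSSteps Δ d.dual c.dual :=
  Relation.reflTransGen_swap.mp <|
    Relation.ReflTransGen.lift (p := Function.swap (PDSStep Δ)) PDSConfig.dual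
      (fun _ _ hstep => hstep.dual hΔ) _ _ h

end Runs

section Derivations

variable {V L : Type} {I : V → Bool} {sgn : L → Sign} {load store : L}
  {C : Set (DTV V L × DTV V L)} {X Y : V} {a b : Sign} {u v : List L}

theorem Deriv.append (h : Deriv I sgn load store C (X, a, u) (Y, b, v)) (w : List L) :
    Deriv I sgn load store C (X, a, u ++ w) (Y, b, v ++ w) := by
  obtain ⟨hX, hY, hrun⟩ := h
  refine ⟨hX, hY, ?_⟩
  simpa only [symWord_append, List.cons_append] using hrun.append (symWord w)

theorem Deriv.dual (h : Deriv I sgn load store C (X, a, u) (Y, b, v)) :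
    Deriv I sgn load store C (Y, Sign.neg.mul b, v) (X, Sign.neg.mul a, u) := by
  obtain ⟨hX, hY, hrun⟩ := h
  refine ⟨hY, hX, ?_⟩
  simpa only [PDSConfig.dual, Ctl.dual, List.map_cons, StkSym.dual, map_dual_symWord] using
    hrun.dual fun _ => dual_mem_Delta

theorem Deriv'.append_of_pos (h : Deriv' I sgn load store C (X, u) (Y, v)) {w : List L}
    (hw : wordSign sgn w = .pos) : Deriv' I sgn load store C (X, u ++ w) (Y, v ++ w) := by
  simpa only [Deriv', wordSign_append, hw, Sign.mul_pos] using Deriv.append h w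

theorem Deriv'.append_of_neg (h : Deriv' I sgn load store C (X, u) (Y, v)) {w : List L}
    (hw : wordSign sgn w = .neg) : Deriv' I sgn load store C (Y, v ++ w) (X, u ++ w) := by
  simpa only [Deriv', wordSign_append, hw, Sign.mul_comm _ .neg] using (Deriv.append h w).dual

end Derivations

theorem deriv'_suffix_general {V L : Type} (I : V → Bool) (sgn : L → Sign) (load store : L)
    (C : Set (DTV V L × DTV V L)) (X Y : V) (u v : List L)
    (h : Deriv' I sgn load store C (X, u) (Y, v)) (w : List L) :
    (wordSign sgn w = .pos → Deriv' I sgn load store C (X, u ++ w) (Y, v ++ w)) ∧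
    (wordSign sgn w = .neg → Deriv' I sgn load store C (Y, v ++ w) (X, u ++ w)) :=
  ⟨h.append_of_pos, h.append_of_neg⟩

/-- if `(X.u, Y.v) ∈ Deriv'(𝒫_𝒞)` and `⟨σ⟩ = ⊕` then
`(X.uσ, Y.vσ) ∈ Deriv'(𝒫_𝒞)`; if instead `⟨σ⟩ = ⊖` then
`(Y.vσ, X.uσ) ∈ Deriv'(𝒫_𝒞)`. -/
theorem deriv'_suffix {V L : Type} (I : V → Bool) (sgn : L → Sign)
    (load store : L) (hload : sgn load = .pos) (hstore : sgn store = .neg)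
    (C : Set (DTV V L × DTV V L))
    (X Y : V) (u v : List L)
    (h : Deriv' I sgn load store C (X, u) (Y, v)) (σ : L) :
    (sgn σ = .pos →
      Deriv' I sgn load store C (X, u ++ [σ]) (Y, v ++ [σ])) ∧
    (sgn σ = .neg →
      Deriv' I sgn load store C (Y, v ++ [σ]) (X, u ++ [σ])) := by
  simpa only [wordSign, Sign.mul_pos] using
    deriv'_suffix_general I sgn load store C X Y u v h [σ]
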